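/- Let M be a λ-term. If M is β-normalizable (i.e., M β-reduces in finitely many steps to a β-normal form), then there exists a ∈ T_r(M) such that NF(a) is a positive rigid term. -/

import Mathlib

/-! Ordinary λ-terms, in de Bruijn notation. -/
inductive Lam : Type
  | var : ℕ → Lam
  | lam : Lam → Lam
  | app : Lam → Lam → Lam
  deriving DecidableEq

namespace Lam

/-- Shift the free indices `≥ d` up by one. -/
def lift (d : ℕ) : Lam → Lam
  | var n => if n < d then var n else var (n + 1)
  | lam M => lam (lift (d + 1) M)
  | app P Q => app (lift d P) (lift d Q)

/-- Capture-avoiding substitution of `N` for the free variable `k`. -/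
def subst : Lam → ℕ → Lam → Lam
  | var n, k, N => if n = k then N else if k < n then var (n - 1) else var n
  | lam M, k, N => lam (subst M (k + 1) (lift 0 N))
  | app P Q, k, N => app (subst P k N) (subst Q k N)

/-- Number of free occurrences of the variable `k`. -/
def count (k : ℕ) : Lam → ℕ
  | var n => if n = k then 1 else 0
  | lam M => count (k + 1) M
  | app P Q => count k P + count k Q

/-- One-step β-reduction. -/
inductive Beta : Lam → Lam → Prop
  | beta (M N : Lam) : Beta (app (lam M) N) (subst M 0 N)
  | lam {M M'} : Beta M M' → Beta (lam M) (lam M')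
  | appL {P P' Q} : Beta P P' → Beta (app P Q) (app P' Q)
  | appR {P Q Q'} : Beta Q Q' → Beta (app P Q) (app P Q')

/-- The head of the application spine is a variable, with no λ on the spine. -/
def neutral : Lam → Bool
  | var _ => true
  | lam _ => false
  | app P _ => neutral P

/-- Head-normal forms: `λx₁…λxₘ. x N₁ … Nₙ`. -/
def isHNF : Lam → Prop
  | var _ => True
  | lam M => isHNF M
  | app P _ => neutral P = true

/-- The head-reduction function `H`: contracts the head redex, identity on head-normal
forms. -/
def H : Lam → Lam
  | var n => var n
  | lam M => lam (H M)
  | app (lam P) Q => subst P 0 Q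
  | app (var n) Q => app (var n) Q
  | app (app P₁ P₂) Q => app (H (app P₁ P₂)) Q

/-- The left-parallel reduction function `L`: identity on β-normal forms, propagated to
the arguments on head-normal forms, contraction of the head redex otherwise. -/
def L : Lam → Lam
  | var n => var n
  | lam M => lam (L M)
  | app (lam P) Q => subst P 0 Q
  | app (var n) Q => app (var n) (L Q)
  | app (app P₁ P₂) Q =>
      if neutral (app P₁ P₂) then app (L (app P₁ P₂)) (L Q)
      else app (L (app P₁ P₂)) Q

/-- Iterated application `M N₁ … Nₙ`. -/
def mkApps (M : Lam) (Ns : List Lam) : Lam := Ns.foldl app M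

/-- All free variables are `< d`. -/
def ClosedAt (d : ℕ) : Lam → Prop
  | var n => n < d
  | lam M => ClosedAt (d + 1) M
  | app P Q => ClosedAt d P ∧ ClosedAt d Q

/-- `M` is head-normalizable: it β-reduces in finitely many steps to a head-normal form. -/
def HeadNormalizable (M : Lam) : Prop :=
  ∃ N, Relation.ReflTransGen Beta M N ∧ isHNF N

/-- `M` is a β-normal form: it contains no β-redex, i.e. admits no β-step. -/
def BetaNF (M : Lam) : Prop := ¬∃ N, Beta M N

/-- `M` is β-normalizable: it β-reduces in finitely many steps to a β-normal form. -/
def BetaNormalizable (M : Lam) : Prop :=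
  ∃ N, Relation.ReflTransGen Beta M N ∧ BetaNF N

/-- `M` is strongly β-normalizable: no infinite β-reduction sequence starts from `M`. -/
def StronglyNormalizable (M : Lam) : Prop := Acc (fun N M' => Beta M' N) M

end Lam

/-! Rigid resource terms (the nonzero ones), in de Bruijn notation:
`a ::= x | λx.a | ⟨c⟩d⃗` with `d⃗` a list of rigid terms.
The term `0` is represented by `none : Option Rig`. -/
inductive Rig : Type
  | var : ℕ → Rig
  | lam : Rig → Rig
  | app : Rig → List Rig → Rig

namespace Rig

mutual
/-- Number of free occurrences of the variable `k` in a rigid term. -/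
def countR (k : ℕ) : Rig → ℕ
  | var n => if n = k then 1 else 0
  | lam a => countR (k + 1) a
  | app c ds => countR k c + countRList k ds
termination_by a => sizeOf a

def countRList (k : ℕ) : List Rig → ℕ
  | [] => 0
  | d :: ds => countR k d + countRList k ds
termination_by ds => sizeOf ds
end

mutual
/-- Shift the free indices `≥ d` up by one. -/
def liftR (d : ℕ) : Rig → Rig
  | var n => if n < d then var n else var (n + 1)
  | lam a => lam (liftR (d + 1) a)
  | app c ds => app (liftR d c) (liftRList d ds)
termination_by a => sizeOf a

def liftRList (d : ℕ) : List Rig → List Rig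
  | [] => []
  | a :: as => liftR d a :: liftRList d as
termination_by as => sizeOf as
end

mutual
/-- Rigid substitution `a[b⃗/k]`: the list `b⃗` is distributed, in order, over the
free occurrences of the variable `k`; the result is `none` (i.e. `0`) when
`|b⃗| ≠ n_k(a)`. -/
def rsubst (k : ℕ) : Rig → List Rig → Option Rig
  | var n, bs =>
      if n = k then (match bs with | [b] => some b | _ => none)
      else (match bs with
            | [] => some (if k < n then var (n - 1) else var n)
            | _ => none)
  | lam a, bs => (rsubst (k + 1) a (liftRList 0 bs)).map lam
  | app c ds, bs =>
      match rsubst k c (bs.take (countR k c)), rsubstList k ds (bs.drop (countR k c)) with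
      | some c', some ds' => some (app c' ds')
      | _, _ => none
termination_by a _ => sizeOf a

def rsubstList (k : ℕ) : List Rig → List Rig → Option (List Rig)
  | [], bs => if bs.isEmpty then some [] else none
  | d :: ds, bs =>
      match rsubst k d (bs.take (countR k d)), rsubstList k ds (bs.drop (countR k d)) with
      | some d', some ds' => some (d' :: ds')
      | _, _ => none
termination_by ds _ => sizeOf ds
end

/-- One-step rigid resource reduction `→_r` (contextual closure of
`⟨λx.a⟩b⃗ →_r a[b⃗/x]`); the result may be `0` (i.e. `none`), which annihilates
the surrounding context. -/
inductive RStep : Rig → Option Rig → Prop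
  | beta (a : Rig) (bs : List Rig) : RStep (app (lam a) bs) (rsubst 0 a bs)
  | lam {a r} : RStep a r → RStep (lam a) (r.map lam)
  | head {c r} (ds : List Rig) : RStep c r → RStep (app c ds) (r.map (fun c' => app c' ds))
  | arg {d r} (c : Rig) (ds₁ ds₂ : List Rig) :
      RStep d r → RStep (app c (ds₁ ++ d :: ds₂)) (r.map (fun d' => app c (ds₁ ++ d' :: ds₂)))

/-- `→_r` on rigid terms extended with `0`; `0` is inert. -/
inductive RStepO : Option Rig → Option Rig → Prop
  | mk {a r} : RStep a r → RStepO (some a) r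

/-- `r` is a `→_r`-normal form (`0` is one). -/
def RNormal (r : Option Rig) : Prop := ¬∃ r', RStepO r r'

/-- The head of the application spine is a variable, with no λ on the spine. -/
def rNeutral : Rig → Bool
  | var _ => true
  | lam _ => false
  | app c _ => rNeutral c

/-- Rigid head-normal forms among nonzero terms: `λx₁…λxₘ.⟨…⟨x⟩d⃗₁…⟩d⃗ₙ`
(the term `0` is a head-normal form, but it is treated separately). -/
def rIsHNF : Rig → Prop
  | var _ => True
  | lam a => rIsHNF a
  | app c _ => rNeutral c = true

/-- The rigid head-reduction function `H_r`: contracts the head redex, identity on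
head-normal forms; the result may be `0` (i.e. `none`). -/
def Hr : Rig → Option Rig
  | var n => some (var n)
  | lam a => (Hr a).map lam
  | app (lam a) bs => rsubst 0 a bs
  | app (var n) ds => some (app (var n) ds)
  | app (app c₁ c₂) ds => (Hr (app c₁ c₂)).map (fun c' => app c' ds)

/-- `H_r` extended to terms-or-`0`. -/
def HrO : Option Rig → Option Rig := fun r => r.bind Hr

mutual
/-- The rigid left-parallel reduction function `L_r`: identity on `→_r`-normal forms,
applied componentwise to the argument lists on head-normal forms, contraction of the
head redex otherwise; the result may be `0` (i.e. `none`). -/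
def Lr : Rig → Option Rig
  | var n => some (var n)
  | lam a => (Lr a).map lam
  | app (lam a) bs => rsubst 0 a bs
  | app (var n) ds => (LrList ds).map (fun ds' => app (var n) ds')
  | app (app c₁ c₂) ds =>
      if rNeutral (app c₁ c₂) then
        match Lr (app c₁ c₂), LrList ds with
        | some c', some ds' => some (app c' ds')
        | _, _ => none
      else (Lr (app c₁ c₂)).map (fun c' => app c' ds)
termination_by a => sizeOf a

def LrList : List Rig → Option (List Rig)
  | [] => some []
  | d :: ds =>
      match Lr d, LrList ds with
      | some d', some ds' => some (d' :: ds')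
      | _, _ => none
termination_by ds => sizeOf ds
end

/-- `L_r` extended to terms-or-`0`. -/
def LrO : Option Rig → Option Rig := fun r => r.bind Lr

/-- Positive resource terms: no empty list/multiset occurs as the argument of an
application. -/
inductive rPositive : Rig → Prop
  | var (n : ℕ) : rPositive (var n)
  | lam {a} : rPositive a → rPositive (lam a)
  | app {c : Rig} {ds : List Rig} :
      rPositive c → ds ≠ [] → (∀ d ∈ ds, rPositive d) → rPositive (app c ds)

end Rig

/-- The rigid expansion `T_r(M)` of a λ-term (equivalently, the support of its Taylor
expansion, with multisets presented by lists: `Texp M` is closed under permutation of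
argument lists). -/
def Texp : Lam → Set Rig
  | Lam.var n => {Rig.var n}
  | Lam.lam M => {a | ∃ b ∈ Texp M, a = Rig.lam b}
  | Lam.app P Q => {a | ∃ c ∈ Texp P, ∃ ds : List Rig, (∀ d ∈ ds, d ∈ Texp Q) ∧ a = Rig.app c ds}

namespace Rig

/-- The support of the `n`-linear substitution `∂_k a · b̄`, where the multiset `b̄` is
presented by the list `bs`: the finite formal sum (multiset) of all nonzero results of
rigid substitutions along bijective assignments, i.e. permutations of `bs`. -/
def permSubst (k : ℕ) (a : Rig) (bs : List Rig) : Multiset Rig :=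
  ↑(bs.permutations.filterMap (fun bs' => rsubst k a bs'))

/-- One step of non-erasing ε-resource reduction `→^{¬e}_{∂ε}` out of a single resource
term, producing a finite formal sum (a multiset) of resource terms: non-erasing resource
β-steps `⟨λx.a⟩b̄ → ∂_x a · b̄` (with `x ∈ FV(a)`) and resource σ₁-steps, under any
context. -/
inductive NEStep : Rig → Multiset Rig → Prop
  | beta {a : Rig} (bs : List Rig) :
      0 < countR 0 a → NEStep (app (lam a) bs) (permSubst 0 a bs)
  | sigma (a : Rig) (ts qs : List Rig) :
      NEStep (app (app (lam a) ts) qs) {app (lam (app a (liftRList 0 qs))) ts}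
  | lam {a σ} : NEStep a σ → NEStep (lam a) (σ.map lam)
  | head {c σ} (ds : List Rig) : NEStep c σ → NEStep (app c ds) (σ.map (fun c' => app c' ds))
  | arg {d σ} (c : Rig) (ds₁ ds₂ : List Rig) :
      NEStep d σ → NEStep (app c (ds₁ ++ d :: ds₂)) (σ.map (fun d' => app c (ds₁ ++ d' :: ds₂)))

/-- Non-erasing ε-resource reduction on finite formal sums, extended by linearity. -/
def NEStepSum (σ τ : Multiset Rig) : Prop :=
  ∃ (a : Rig) (ρ υ : Multiset Rig), σ = a ::ₘ ρ ∧ NEStep a υ ∧ τ = υ + ρ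

/-- `σ` is a `→^{¬e}_{∂ε}`-normal form. -/
def NENormal (σ : Multiset Rig) : Prop := ¬∃ τ, NEStepSum σ τ

end Rig

/-- One step of non-erasing ε-reduction on λ-terms: non-erasing β-steps
`(λx.M)N → M[N/x]` (with `x ∈ FV(M)`) together with σ₁-steps
`((λx.M)N)P → (λx.MP)N` (`x ∉ FV(P)`), under any context. -/
inductive NEeps : Lam → Lam → Prop
  | beta {M : Lam} (N : Lam) :
      0 < Lam.count 0 M → NEeps (Lam.app (Lam.lam M) N) (Lam.subst M 0 N)
  | sigma (M N P : Lam) :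
      NEeps (Lam.app (Lam.app (Lam.lam M) N) P)
        (Lam.app (Lam.lam (Lam.app M (Lam.lift 0 P))) N)
  | lam {M M'} : NEeps M M' → NEeps (Lam.lam M) (Lam.lam M')
  | appL {P P' Q} : NEeps P P' → NEeps (Lam.app P Q) (Lam.app P' Q)
  | appR {P Q Q'} : NEeps Q Q' → NEeps (Lam.app P Q) (Lam.app P Q')

/-- The set `S` of λ-terms. -/
inductive SLam : Lam → Prop
  | varApp (n : ℕ) (Ms : List Lam) :
      (∀ M ∈ Ms, SLam M) → SLam (Lam.mkApps (Lam.var n) Ms)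
  | lam {M} : SLam M → SLam (Lam.lam M)
  | redex (M₀ M₁ : Lam) (Ms : List Lam) :
      SLam M₁ → SLam (Lam.mkApps (Lam.subst M₀ 0 M₁) Ms) →
      SLam (Lam.mkApps (Lam.app (Lam.lam M₀) M₁) Ms)

/-- λI-terms: every abstraction binds a variable occurring free in its body. -/
def LamI : Lam → Prop
  | Lam.var _ => True
  | Lam.lam M => LamI M ∧ 0 < Lam.count 0 M
  | Lam.app P Q => LamI P ∧ LamI Q

/-! A β-step `M → N` can be traced backwards through rigid expansions: every `b ∈ T_r(N)` is a
multi-step reduct of some `a ∈ T_r(M)`, because an element of `T_r(P[Q/x])` is a rigid substitution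
`p[q⃗/x]` with `p ∈ T_r(P)` and the `qᵢ` in `T_r(Q)`, that is, the contractum of `⟨λx.p⟩q⃗`.
So it suffices to find a positive `→_r`-normal element in the expansion of a β-normal form `N`.
All elements of `T_r(N)` are `→_r`-normal, since a redex in one of them sits over a β-redex of `N`,
and taking every argument list to be a singleton gives a positive one. -/

theorem exists_forall₂_of_forall_mem {α β : Type*} {R : α → β → Prop} {l : List β}
    (h : ∀ b ∈ l, ∃ a, R a b) : ∃ l', List.Forall₂ R l' l := by
  induction l with
  | nil => exact ⟨[], .nil⟩
  | cons b l ih =>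
    obtain ⟨⟨a, ha⟩, hl⟩ := List.forall_mem_cons.1 h
    obtain ⟨l', hl'⟩ := ih hl
    exact ⟨a :: l', .cons ha hl'⟩

theorem exists_map_eq_of_forall_mem_image {α β : Type*} {f : α → β} {S : Set α} {l : List β}
    (h : ∀ b ∈ l, b ∈ f '' S) : ∃ l' : List α, (∀ a ∈ l', a ∈ S) ∧ l'.map f = l := by
  obtain ⟨l', hl'⟩ := exists_forall₂_of_forall_mem h
  obtain ⟨hS, hf⟩ := (List.forall₂_and_left _ _).1 hl'
  exact ⟨l', hS, by rwa [← List.forall₂_eq_eq_eq, List.forall₂_map_left_iff]⟩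

namespace Rig

theorem lam_mem_texp {a : Rig} {M : Lam} :
    lam a ∈ Texp M ↔ ∃ M', M = .lam M' ∧ a ∈ Texp M' := by
  cases M <;> simp [Texp]

theorem app_mem_texp {c : Rig} {ds : List Rig} {M : Lam} :
    app c ds ∈ Texp M ↔ ∃ P Q, M = .app P Q ∧ c ∈ Texp P ∧ ∀ d ∈ ds, d ∈ Texp Q := by
  cases M <;> simp [Texp]

theorem lam_mem_texp_lam {a : Rig} {M : Lam} : lam a ∈ Texp (.lam M) ↔ a ∈ Texp M := by
  simp [Texp]

theorem app_mem_texp_app {c : Rig} {ds : List Rig} {P Q : Lam} :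
    app c ds ∈ Texp (.app P Q) ↔ c ∈ Texp P ∧ ∀ d ∈ ds, d ∈ Texp Q := by
  simp [Texp]

theorem exists_mem_texp_rPositive (M : Lam) : ∃ a ∈ Texp M, rPositive a := by
  induction M with
  | var n => exact ⟨var n, rfl, .var n⟩
  | lam M ih =>
    obtain ⟨a, ha, ha_pos⟩ := ih
    exact ⟨lam a, lam_mem_texp_lam.2 ha, .lam ha_pos⟩
  | app P Q ihP ihQ =>
    obtain ⟨c, hc, hc_pos⟩ := ihP
    obtain ⟨d, hd, hd_pos⟩ := ihQ
    exact ⟨app c [d], app_mem_texp_app.2 ⟨hc, by simpa⟩, .app hc_pos (by simp) (by simpa)⟩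

theorem liftRList_eq_map (k : ℕ) (as : List Rig) : liftRList k as = as.map (liftR k) := by
  induction as with
  | nil => simp [liftRList]
  | cons a as ih => simp [liftRList, ih]

theorem texp_lift_subset (M : Lam) (k : ℕ) : Texp (M.lift k) ⊆ liftR k '' Texp M := by
  induction M generalizing k with
  | var n =>
    intro b hb
    refine ⟨var n, rfl, ?_⟩
    by_cases h : n < k <;> simp_all [Lam.lift, Texp, liftR]
  | lam M ih =>
    rintro _ ⟨b, hb, rfl⟩
    obtain ⟨a, ha, rfl⟩ := ih _ hb
    exact ⟨lam a, lam_mem_texp_lam.2 ha, by simp [liftR]⟩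
  | app P Q ihP ihQ =>
    rintro _ ⟨c, hc, ds, hds, rfl⟩
    obtain ⟨a, ha, rfl⟩ := ihP k hc
    obtain ⟨es, hes, rfl⟩ := exists_map_eq_of_forall_mem_image fun d hd ↦ ihQ k (hds d hd)
    exact ⟨app a es, app_mem_texp_app.2 ⟨ha, hes⟩, by simp [liftR, liftRList_eq_map]⟩

mutual

theorem length_eq_countR_of_rsubst_eq_some {k : ℕ} : ∀ {a : Rig} {bs : List Rig} {b : Rig},
    rsubst k a bs = some b → bs.length = countR k a
  | var n, bs, b, h => by
    rcases bs with _ | ⟨_, _ | _⟩ <;> by_cases hn : n = k <;> simp_all [rsubst, countR]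
  | lam a, bs, b, h => by
    obtain ⟨b', hb', -⟩ : ∃ b', rsubst (k + 1) a (liftRList 0 bs) = some b' ∧ lam b' = b := by
      simpa [rsubst] using h
    simpa [countR, liftRList_eq_map] using length_eq_countR_of_rsubst_eq_some hb'
  | app c ds, bs, b, h => by
    rw [rsubst] at h
    split at h
    next c' ds' hc hds =>
      have hc_len := length_eq_countR_of_rsubst_eq_some hc
      have hds_len := length_eq_countRList_of_rsubstList_eq_some hds
      rw [List.length_take] at hc_len
      rw [List.length_drop] at hds_len
      rw [countR]
      lia
    next => contradiction

theorem length_eq_countRList_of_rsubstList_eq_some {k : ℕ} : ∀ {as bs ds : List Rig},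
    rsubstList k as bs = some ds → bs.length = countRList k as
  | [], bs, ds, h => by cases bs <;> simp_all [rsubstList, countRList]
  | a :: as, bs, ds, h => by
    rw [rsubstList] at h
    split at h
    next d' ds' ha has =>
      have ha_len := length_eq_countR_of_rsubst_eq_some ha
      have has_len := length_eq_countRList_of_rsubstList_eq_some has
      rw [List.length_take] at ha_len
      rw [List.length_drop] at has_len
      rw [countRList]
      lia
    next => contradiction

end

theorem rsubst_app_append {k : ℕ} {a c : Rig} {as bs bs' ds : List Rig}
    (ha : rsubst k a bs = some c) (has : rsubstList k as bs' = some ds) :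
    rsubst k (app a as) (bs ++ bs') = some (app c ds) := by
  simp [rsubst, ← length_eq_countR_of_rsubst_eq_some ha, ha, has]

theorem rsubstList_cons_append {k : ℕ} {a d : Rig} {as bs bs' ds : List Rig}
    (ha : rsubst k a bs = some d) (has : rsubstList k as bs' = some ds) :
    rsubstList k (a :: as) (bs ++ bs') = some (d :: ds) := by
  simp [rsubstList, ← length_eq_countR_of_rsubst_eq_some ha, ha, has]

/-- The set of all nonzero rigid substitutions `a[b⃗/k]` with `a ∈ S` and `b⃗` a list of
elements of `U`; it relates the expansion of `M[N/k]` to those of `M` and `N`. -/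
def rsubstSet (k : ℕ) (S U : Set Rig) : Set Rig :=
  {d | ∃ a ∈ S, ∃ bs : List Rig, (∀ b ∈ bs, b ∈ U) ∧ rsubst k a bs = some d}

theorem exists_rsubstList_eq_some {k : ℕ} {S U : Set Rig} {ds : List Rig}
    (h : ∀ d ∈ ds, d ∈ rsubstSet k S U) :
    ∃ as : List Rig, (∀ a ∈ as, a ∈ S) ∧
      ∃ bs : List Rig, (∀ b ∈ bs, b ∈ U) ∧ rsubstList k as bs = some ds := by
  induction ds with
  | nil => exact ⟨[], by simp, [], by simp, by simp [rsubstList]⟩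
  | cons d ds ih =>
    obtain ⟨⟨a, ha, bs, hbs, had⟩, hds⟩ := List.forall_mem_cons.1 h
    obtain ⟨as, has, bs', hbs', hasds⟩ := ih hds
    exact ⟨a :: as, List.forall_mem_cons.2 ⟨ha, has⟩, bs ++ bs',
      List.forall_mem_append.2 ⟨hbs, hbs'⟩, rsubstList_cons_append had hasds⟩

theorem texp_subst_subset (M : Lam) (k : ℕ) (N : Lam) :
    Texp (M.subst k N) ⊆ rsubstSet k (Texp M) (Texp N) := by
  induction M generalizing k N with
  | var n =>
    intro b hb
    refine ⟨var n, rfl, ?_⟩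
    by_cases h_eq : n = k
    · exact ⟨[b], by simpa [Lam.subst, h_eq] using hb, by simp [rsubst, h_eq]⟩
    · refine ⟨[], by simp, ?_⟩
      by_cases h_lt : k < n <;> simp_all [Lam.subst, Texp, rsubst]
  | lam M ih =>
    rintro _ ⟨d, hd, rfl⟩
    obtain ⟨a, ha, bs, hbs, had⟩ := ih _ _ hd
    obtain ⟨bs', hbs', rfl⟩ :=
      exists_map_eq_of_forall_mem_image fun b hb ↦ texp_lift_subset N 0 (hbs b hb)
    exact ⟨lam a, lam_mem_texp_lam.2 ha, bs', hbs', by simp [rsubst, liftRList_eq_map, had]⟩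
  | app P Q ihP ihQ =>
    rintro _ ⟨c, hc, ds, hds, rfl⟩
    obtain ⟨a, ha, bs, hbs, hac⟩ := ihP k N hc
    obtain ⟨as, has, bs', hbs', hasds⟩ := exists_rsubstList_eq_some fun d hd ↦ ihQ k N (hds d hd)
    exact ⟨app a as, app_mem_texp_app.2 ⟨ha, has⟩, bs ++ bs',
      List.forall_mem_append.2 ⟨hbs, hbs'⟩, rsubst_app_append hac hasds⟩

/-- Many-step rigid resource reduction `→_r*` on rigid terms extended with `0`. -/
abbrev RSteps : Option Rig → Option Rig → Prop := Relation.ReflTransGen RStepO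

theorem RSteps.map {f : Rig → Rig} (hf : ∀ {a r}, RStep a r → RStep (f a) (r.map f))
    {r s : Option Rig} (h : RSteps r s) : RSteps (r.map f) (s.map f) :=
  Relation.ReflTransGen.lift (Option.map f) (fun _ _ ⟨step⟩ ↦ .mk (hf step)) _ _ h

theorem RSteps.app_append_of_forall₂ (c : Rig) {as ds : List Rig}
    (h : List.Forall₂ (fun a d ↦ RSteps (some a) (some d)) as ds) (cs : List Rig) :
    RSteps (some (app c (cs ++ as))) (some (app c (cs ++ ds))) := by
  induction h generalizing cs with
  | nil => exact .refl
  | @cons a d as ds had _ ih =>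
    have h_head : RSteps (some (app c (cs ++ a :: as))) (some (app c (cs ++ d :: as))) :=
      RSteps.map (.arg c cs as) had
    have h_tail : RSteps (some (app c (cs ++ d :: as))) (some (app c (cs ++ d :: ds))) := by
      simpa using ih (cs ++ [d])
    exact h_head.trans h_tail

theorem exists_beta_of_rStep {a : Rig} {r : Option Rig} (h : RStep a r) {M : Lam}
    (hM : a ∈ Texp M) : ∃ N, Lam.Beta M N := by
  induction h generalizing M with
  | beta a bs =>
    obtain ⟨_, Q, rfl, ha, -⟩ := app_mem_texp.1 hM
    obtain ⟨P, rfl, -⟩ := lam_mem_texp.1 ha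
    exact ⟨_, .beta P Q⟩
  | lam _ ih =>
    obtain ⟨M, rfl, ha⟩ := lam_mem_texp.1 hM
    exact (ih ha).imp' _ fun _ ↦ .lam
  | head ds _ ih =>
    obtain ⟨P, Q, rfl, hc, -⟩ := app_mem_texp.1 hM
    exact (ih hc).imp' _ fun _ ↦ .appL
  | arg c ds₁ ds₂ _ ih =>
    obtain ⟨P, Q, rfl, -, hds⟩ := app_mem_texp.1 hM
    exact (ih (hds _ (by simp))).imp' _ fun _ ↦ .appR

theorem rNormal_of_mem_texp {M : Lam} (hM : M.BetaNF) {a : Rig} (ha : a ∈ Texp M) :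
    RNormal (some a) :=
  fun ⟨_, ⟨step⟩⟩ ↦ hM (exists_beta_of_rStep step ha)

theorem exists_rSteps_of_beta {M N : Lam} (h : M.Beta N) {b : Rig} (hb : b ∈ Texp N) :
    ∃ a ∈ Texp M, RSteps (some a) (some b) := by
  induction h generalizing b with
  | beta P Q =>
    obtain ⟨a, ha, bs, hbs, hab⟩ := texp_subst_subset P 0 Q hb
    exact ⟨app (lam a) bs, app_mem_texp_app.2 ⟨lam_mem_texp_lam.2 ha, hbs⟩,
      .single (.mk (hab ▸ .beta a bs))⟩
  | lam _ ih =>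
    obtain ⟨b, hb, rfl⟩ := hb
    obtain ⟨a, ha, hab⟩ := ih hb
    exact ⟨lam a, lam_mem_texp_lam.2 ha, RSteps.map .lam hab⟩
  | appL _ ih =>
    obtain ⟨c, hc, ds, hds, rfl⟩ := hb
    obtain ⟨a, ha, hac⟩ := ih hc
    exact ⟨app a ds, app_mem_texp_app.2 ⟨ha, hds⟩, RSteps.map (.head ds) hac⟩
  | appR _ ih =>
    obtain ⟨c, hc, ds, hds, rfl⟩ := hb
    obtain ⟨as, h_as⟩ := exists_forall₂_of_forall_mem fun d hd ↦ ih (hds d hd)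
    obtain ⟨has, hasds⟩ := (List.forall₂_and_left _ _).1 h_as
    exact ⟨app c as, app_mem_texp_app.2 ⟨hc, has⟩, RSteps.app_append_of_forall₂ c hasds []⟩

theorem exists_rSteps_of_reflTransGen_beta {M N : Lam} (h : Relation.ReflTransGen Lam.Beta M N)
    {b : Rig} (hb : b ∈ Texp N) : ∃ a ∈ Texp M, RSteps (some a) (some b) := by
  induction h using Relation.ReflTransGen.head_induction_on with
  | refl => exact ⟨b, hb, .refl⟩
  | head step _ ih =>
    obtain ⟨c, hc, hcb⟩ := ih
    obtain ⟨a, ha, hac⟩ := exists_rSteps_of_beta step hc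
    exact ⟨a, ha, hac.trans hcb⟩

end Rig

/-- if `M` is β-normalizable then some `a ∈ T_r(M)` has a positive rigid
term as its `→_r`-normal form `NF(a)`. -/
theorem positive_NF_of_beta_normalizable {M : Lam} (h : Lam.BetaNormalizable M) :
    ∃ a ∈ Texp M, ∃ b : Rig,
      Relation.ReflTransGen Rig.RStepO (some a) (some b) ∧ Rig.RNormal (some b) ∧
        Rig.rPositive b := by
  obtain ⟨N, hMN, hN⟩ := h
  obtain ⟨b, hb, hb_pos⟩ := Rig.exists_mem_texp_rPositive N
  obtain ⟨a, ha, hab⟩ := Rig.exists_rSteps_of_reflTransGen_beta hMN hb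
  exact ⟨a, ha, b, hab, Rig.rNormal_of_mem_texp hN hb, hb_pos⟩
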